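/- arXiv:1209.5990 — 2 statements merged into one kernel-verified Lean document; each statement's English description precedes it below -/
import Mathlib

section
/- Analytic form of the Hessian comparison: Let n ≥ 1, A₁, A₂, K ≥ 0, and set c = (4√n + 3)·A₁² + 2·A₂ + K. Let T > 0, let X : (0, T] → M_n(ℂ) be continuously differentiable with X(ρ) Hermitian for every ρ, and let A : (0, T] → M_n(ℂ) be continuous with A(ρ) + A(ρ)* + √2·A₁·I positive semidefinite for every ρ. Assume that ( (2√n + 1/2)·A₁² + A₂ + K/2 )·I − ( X'(ρ) + X(ρ)² + A(ρ)X(ρ) + X(ρ)A(ρ)* ) is positive semidefinite for all ρ ∈ (0, T], and that there exists ρ₀ ∈ (0, T] with (1/ρ + (√2/2)·A₁)·I − X(ρ) positive semidefinite for all ρ ∈ (0, ρ₀]. Then (1/ρ + √c)·I − X(ρ) is positive semidefinite for all ρ ∈ (0, T]. -/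
open Matrix ComplexOrder

/-!
The bound is propagated by a null-vector maximum principle. If `B = f • 1 - X` is positive definite
at `t₀` and degenerates later, then at the first such time `r` there is `v ≠ 0` with `B r *ᵥ v = 0`,
and `t ↦ vᴴ (B t) v` attains its minimum over `[t₀, r]` at `r`, so that `vᴴ (B' r) v ≤ 0`. But
`X r *ᵥ v = f r • v`, and the Riccati inequality evaluated at this eigenvector gives
`vᴴ (X' r) v ≤ (M - f² + a f) vᴴ v`, which contradicts the strict scalar inequality
`M < f' + f² - a f`. A nonstrict scalar inequality reduces to the strict one by replacing `f` with
`f + ε`. By AM-GM, `2 a √c ≤ a² + c`, the function `f ρ = 1 / ρ + √c` satisfies the nonstrict one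
as soon as `2 M + a² ≤ c`.
-/

open Set Function
open scoped Topology

section FirstZero

theorem exists_first_zero {α V : Type*} [ConditionallyCompleteLinearOrder α] [TopologicalSpace α]
    [OrderTopology α] [DenselyOrdered α] [TopologicalSpace V] [T2Space V] {K : Set V}
    (hK : IsCompact K) {g : α → V → ℝ} {a b : α} (hg : ContinuousOn (uncurry g) (Icc a b ×ˢ K))
    (ha : ∀ v ∈ K, 0 < g a v) (hneg : ∃ t ∈ Icc a b, ∃ v ∈ K, g t v ≤ 0) :
    ∃ r ∈ Ioc a b, ∃ v ∈ K, g r v = 0 ∧ ∀ t ∈ Icc a r, ∀ w ∈ K, 0 ≤ g t w := by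
  let Z : Set (α × V) := (Icc a b ×ˢ K) ∩ uncurry g ⁻¹' Iic 0
  have hS : IsCompact (Icc a b ×ˢ K) := isCompact_Icc.prod hK
  have hZ : IsCompact Z :=
    hS.of_isClosed_subset (hg.preimage_isClosed_of_isClosed hS.isClosed isClosed_Iic)
      inter_subset_left
  obtain ⟨t, ht, w, hw, htw⟩ := hneg
  obtain ⟨⟨r, v⟩, ⟨⟨hr, hv⟩, hrv⟩, hmin⟩ :=
    hZ.exists_isMinOn ⟨(t, w), ⟨ht, hw⟩, htw⟩ continuousOn_fst
  have har : a < r := hr.1.lt_of_ne fun h ↦ (ha v hv).not_ge (h ▸ hrv)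
  have hpos : ∀ t ∈ Ico a r, ∀ w ∈ K, 0 < g t w := fun t ht w hw ↦ by
    by_contra! hle
    exact ht.2.not_ge (hmin (a := (t, w)) ⟨⟨⟨ht.1, ht.2.le.trans hr.2⟩, hw⟩, hle⟩)
  have hnonneg : ∀ t ∈ Icc a r, ∀ w ∈ K, 0 ≤ g t w := fun t ht w hw ↦ by
    have hmaps : MapsTo (·, w) (Icc a r) (Icc a b ×ˢ K) :=
      fun s hs ↦ ⟨⟨hs.1, hs.2.trans hr.2⟩, hw⟩
    have hcont : ContinuousOn (g · w) (Icc a r) := hg.comp (by fun_prop) hmaps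
    rw [← closure_Ico har.ne] at ht hcont
    exact le_on_closure (fun s hs ↦ (hpos s hs w hw).le) continuousOn_const hcont ht
  exact ⟨r, ⟨har, hr.2⟩, v, hv, le_antisymm hrv (hnonneg r ⟨har.le, le_rfl⟩ v hv), hnonneg⟩

theorem hasDerivWithinAt_nonpos_of_isMinOn_Icc_right {f : ℝ → ℝ} {f' a b : ℝ} (hab : a < b)
    (hf : HasDerivWithinAt f f' (Icc a b) b) (hmin : IsMinOn f (Icc a b) b) : f' ≤ 0 := by
  have hcone : a - b ∈ posTangentConeAt (Icc a b) b :=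
    sub_mem_posTangentConeAt_of_segment_subset
      ((convex_Icc a b).segment_subset (right_mem_Icc.2 hab.le) (left_mem_Icc.2 hab.le))
  have h : 0 ≤ (a - b) * f' := by
    simpa using hmin.localize.hasFDerivWithinAt_nonneg hf.hasFDerivWithinAt hcone
  exact nonpos_of_mul_nonneg_right h (sub_neg.2 hab)

end FirstZero

section RealSmulOne

variable {𝕜 ι : Type*} [RCLike 𝕜] [DecidableEq ι]

theorem isHermitian_real_smul_one (r : ℝ) : (r • (1 : Matrix ι ι 𝕜)).IsHermitian :=
  isHermitian_one.smul (.all r)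

theorem posSemidef_smul_one_sub_mono {r s : ℝ} (hrs : r ≤ s) {X : Matrix ι ι 𝕜}
    (h : (r • (1 : Matrix ι ι 𝕜) - X).PosSemidef) :
    (s • (1 : Matrix ι ι 𝕜) - X).PosSemidef := by
  have hsplit : s • (1 : Matrix ι ι 𝕜) - X = (r • 1 - X) + (s - r) • 1 := by
    rw [sub_smul]; abel
  rw [hsplit]
  exact h.add (PosSemidef.one.smul (sub_nonneg.2 hrs))

theorem posSemidef_of_forall_pos_add_smul_one {M : Matrix ι ι 𝕜}
    (h : ∀ ε : ℝ, 0 < ε → (M + ε • (1 : Matrix ι ι 𝕜)).PosSemidef) : M.PosSemidef := by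
  have hM : M.IsHermitian := by
    simpa using (h 1 one_pos).isHermitian.sub (isHermitian_real_smul_one 1)
  refine ⟨hM, fun x ↦ ?_⟩
  have hcont : Continuous fun ε : ℝ ↦
      x.sum fun i xi ↦ x.sum fun j xj ↦ star xi * (M + ε • (1 : Matrix ι ι 𝕜)) i j * xj := by
    simp only [Finsupp.sum, Matrix.add_apply, Matrix.smul_apply]
    fun_prop
  refine ge_of_tendsto (tendsto_nhdsWithin_of_tendsto_nhds (s := Ioi 0) (hcont.tendsto' 0 _ ?_))
    (eventually_mem_nhdsWithin.mono fun ε hε ↦ (h ε hε).2 x)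
  simp only [zero_smul, add_zero]

end RealSmulOne

section QuadraticForm

variable {𝕜 ι : Type*} [RCLike 𝕜] [Fintype ι]

/-- The real part of the Hermitian form `vᴴ M v` of a square matrix `M`. It is bundled as an
`ℝ`-linear map in `M`, since the vector `v` is fixed whenever it is expanded or differentiated. -/
def reQuadForm (v : ι → 𝕜) : Matrix ι ι 𝕜 →ₗ[ℝ] ℝ where
  toFun M := RCLike.re (star v ⬝ᵥ M *ᵥ v)
  map_add' M N := by simp [add_mulVec, dotProduct_add]
  map_smul' r M := by simp [smul_mulVec, dotProduct_smul, RCLike.smul_re]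

theorem reQuadForm_apply (v : ι → 𝕜) (M : Matrix ι ι 𝕜) :
    reQuadForm v M = RCLike.re (star v ⬝ᵥ M *ᵥ v) := rfl

theorem reQuadForm_eq_sum (v : ι → 𝕜) (M : Matrix ι ι 𝕜) :
    reQuadForm v M = ∑ i, ∑ j, RCLike.re (star (v i) * (M i j * v j)) := by
  simp [reQuadForm_apply, dotProduct, mulVec, Finset.mul_sum]

theorem reQuadForm_real_smul (r : ℝ) (v : ι → 𝕜) (M : Matrix ι ι 𝕜) :
    reQuadForm (r • v) M = r ^ 2 * reQuadForm v M := by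
  simp [reQuadForm_apply, mulVec_smul, dotProduct_smul, smul_dotProduct, star_smul,
    RCLike.smul_re, pow_two, mul_assoc]

theorem reQuadForm_conjTranspose (v : ι → 𝕜) (M : Matrix ι ι 𝕜) :
    reQuadForm v Mᴴ = reQuadForm v M := by
  have h : star v ⬝ᵥ Mᴴ *ᵥ v = star (star v ⬝ᵥ M *ᵥ v) := by
    rw [star_dotProduct, star_mulVec, conjTranspose_conjTranspose, ← dotProduct_mulVec]
  simp [reQuadForm_apply, h]

theorem reQuadForm_mul_of_mulVec_eq_smul {X : Matrix ι ι 𝕜} {v : ι → 𝕜} {f : ℝ}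
    (hv : X *ᵥ v = f • v) (A : Matrix ι ι 𝕜) :
    reQuadForm v (A * X) = f * reQuadForm v A := by
  simp [reQuadForm_apply, ← mulVec_mulVec, hv, mulVec_smul, dotProduct_smul, RCLike.smul_re]

theorem reQuadForm_one_pos [DecidableEq ι] {v : ι → 𝕜} (hv : v ≠ 0) :
    0 < reQuadForm v (1 : Matrix ι ι 𝕜) :=
  PosDef.one.re_dotProduct_pos hv

-- `‖v‖` is the sup norm of `ι → 𝕜`: the argument only uses homogeneity and a compact unit sphere.
theorem reQuadForm_eq_sq_norm_mul (v : ι → 𝕜) (M : Matrix ι ι 𝕜) :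
    reQuadForm v M = ‖v‖ ^ 2 * reQuadForm (‖v‖⁻¹ • v) M := by
  obtain rfl | hv := eq_or_ne v 0
  · simp [reQuadForm_apply]
  · rw [reQuadForm_real_smul, ← mul_assoc, ← mul_pow, mul_inv_cancel₀ (norm_ne_zero_iff.2 hv),
      one_pow, one_mul]

theorem posSemidef_of_forall_mem_sphere {M : Matrix ι ι 𝕜} (hM : M.IsHermitian)
    (h : ∀ v ∈ Metric.sphere (0 : ι → 𝕜) 1, 0 ≤ reQuadForm v M) : M.PosSemidef := by
  refine .of_dotProduct_mulVec_nonneg hM fun v ↦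
    RCLike.nonneg_iff.2 ⟨?_, hM.im_star_dotProduct_mulVec_self v⟩
  obtain rfl | hv := eq_or_ne v 0
  · simp
  · rw [← reQuadForm_apply, reQuadForm_eq_sq_norm_mul]
    exact mul_nonneg (sq_nonneg _) (h _ (by simp [norm_smul, hv]))

theorem posDef_of_forall_mem_sphere {M : Matrix ι ι 𝕜} (hM : M.IsHermitian)
    (h : ∀ v ∈ Metric.sphere (0 : ι → 𝕜) 1, 0 < reQuadForm v M) : M.PosDef := by
  refine .of_dotProduct_mulVec_pos hM fun v hv ↦
    RCLike.pos_iff.2 ⟨?_, hM.im_star_dotProduct_mulVec_self v⟩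
  rw [← reQuadForm_apply, reQuadForm_eq_sq_norm_mul]
  exact mul_pos (pow_pos (norm_pos_iff.2 hv) 2) (h _ (by simp [norm_smul, hv]))

theorem mulVec_eq_zero_of_reQuadForm_eq_zero {M : Matrix ι ι 𝕜} (hM : M.PosSemidef) {v : ι → 𝕜}
    (hv : reQuadForm v M = 0) : M *ᵥ v = 0 :=
  (hM.dotProduct_mulVec_zero_iff v).1 <|
    RCLike.ext (by simpa [reQuadForm_apply] using hv)
      (by simpa using hM.1.im_star_dotProduct_mulVec_self v)

theorem continuousOn_uncurry_reQuadForm {α : Type*} [TopologicalSpace α]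
    {B : α → Matrix ι ι 𝕜} {s : Set α} (hB : ∀ i j, ContinuousOn (fun t ↦ B t i j) s) :
    ContinuousOn (uncurry fun t v ↦ reQuadForm v (B t)) (s ×ˢ univ) := by
  simp only [uncurry_def, reQuadForm_eq_sum]
  refine continuousOn_finsetSum _ fun i _ ↦ continuousOn_finsetSum _ fun j _ ↦ ?_
  have hentry : ContinuousOn (fun p : α × (ι → 𝕜) ↦ B p.1 i j) (s ×ˢ univ) :=
    (hB i j).comp continuousOn_fst fun p hp ↦ hp.1
  refine RCLike.continuous_re.comp_continuousOn (.mul ?_ (hentry.mul ?_)) <;> fun_prop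

theorem hasDerivWithinAt_reQuadForm {B : ℝ → Matrix ι ι 𝕜} {B' : Matrix ι ι 𝕜} {s : Set ℝ}
    {t : ℝ} (hB : ∀ i j, HasDerivWithinAt (fun t ↦ B t i j) (B' i j) s t) (v : ι → 𝕜) :
    HasDerivWithinAt (fun t ↦ reQuadForm v (B t)) (reQuadForm v B') s t := by
  simp only [reQuadForm_eq_sum]
  refine .fun_sum fun i _ ↦ .fun_sum fun j _ ↦ ?_
  exact RCLike.reCLM.hasFDerivAt.comp_hasDerivWithinAt t
    (((hB i j).mul_const (v j)).const_mul (star (v i)))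

end QuadraticForm

section MatrixRiccati

variable {𝕜 ι : Type*} [RCLike 𝕜] [Fintype ι]

theorem posDef_of_reQuadForm_deriv_pos_of_mulVec_eq_zero {B B' : ℝ → Matrix ι ι 𝕜} {t₀ T : ℝ}
    (hB : ∀ t ∈ Icc t₀ T, ∀ i j,
      HasDerivWithinAt (fun s ↦ B s i j) (B' t i j) (Icc t₀ T) t)
    (hHerm : ∀ t ∈ Icc t₀ T, (B t).IsHermitian)
    (hnull : ∀ t ∈ Icc t₀ T, ∀ v ≠ 0, B t *ᵥ v = 0 → 0 < reQuadForm v (B' t))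
    (hinit : (B t₀).PosDef) : ∀ t ∈ Icc t₀ T, (B t).PosDef := by
  have hcont : ContinuousOn (uncurry fun t v ↦ reQuadForm v (B t))
      (Icc t₀ T ×ˢ Metric.sphere (0 : ι → 𝕜) 1) :=
    (continuousOn_uncurry_reQuadForm fun i j t ht ↦ (hB t ht i j).continuousWithinAt).mono
      (prod_mono_right (subset_univ _))
  have hsphere : ∀ v ∈ Metric.sphere (0 : ι → 𝕜) 1, v ≠ 0 := fun v hv ↦
    ne_zero_of_mem_unit_sphere ⟨v, hv⟩
  by_contra! ⟨t, ht, hnot⟩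
  have hneg : ∃ t ∈ Icc t₀ T, ∃ v ∈ Metric.sphere (0 : ι → 𝕜) 1, reQuadForm v (B t) ≤ 0 := by
    by_contra! hpos
    exact hnot (posDef_of_forall_mem_sphere (hHerm t ht) (hpos t ht))
  obtain ⟨r, hr, v, hv, hzero, hnonneg⟩ := exists_first_zero (isCompact_sphere _ _) hcont
    (fun v hv ↦ hinit.re_dotProduct_pos (hsphere v hv)) hneg
  have hsub : Icc t₀ r ⊆ Icc t₀ T := Icc_subset_Icc_right hr.2
  have hrT : r ∈ Icc t₀ T := Ioc_subset_Icc_self hr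
  have hpsd : (B r).PosSemidef :=
    posSemidef_of_forall_mem_sphere (hHerm r hrT) (hnonneg r ⟨hr.1.le, le_rfl⟩)
  have hkernel : B r *ᵥ v = 0 := mulVec_eq_zero_of_reQuadForm_eq_zero hpsd hzero
  have hmin : IsMinOn (fun t ↦ reQuadForm v (B t)) (Icc t₀ r) r :=
    fun s hs ↦ hzero.trans_le (hnonneg s hs v hv)
  have hderiv := (hasDerivWithinAt_reQuadForm (hB r hrT) v).mono hsub
  exact (hnull r hrT v (hsphere v hv) hkernel).not_ge
    (hasDerivWithinAt_nonpos_of_isMinOn_Icc_right hr.1 hderiv hmin)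

variable [DecidableEq ι]

theorem reQuadForm_le_of_riccati_of_mulVec_eq_smul {X X' A : Matrix ι ι 𝕜} {a M f : ℝ} {v : ι → 𝕜}
    (hHerm : X.IsHermitian) (hA : (A + Aᴴ + a • (1 : Matrix ι ι 𝕜)).PosSemidef)
    (hineq : (M • (1 : Matrix ι ι 𝕜) - (X' + X ^ 2 + A * X + X * Aᴴ)).PosSemidef)
    (hf : 0 ≤ f) (hv : X *ᵥ v = f • v) :
    reQuadForm v X' ≤ (M - f ^ 2 + a * f) * reQuadForm v (1 : Matrix ι ι 𝕜) := by
  have hX : reQuadForm v X = f * reQuadForm v (1 : Matrix ι ι 𝕜) := by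
    simpa using reQuadForm_mul_of_mulVec_eq_smul hv 1
  have hsq : reQuadForm v (X ^ 2) = f ^ 2 * reQuadForm v (1 : Matrix ι ι 𝕜) := by
    rw [pow_two, reQuadForm_mul_of_mulVec_eq_smul hv, hX]; ring
  have hAX : reQuadForm v (A * X) = f * reQuadForm v A := reQuadForm_mul_of_mulVec_eq_smul hv A
  have hXA : reQuadForm v (X * Aᴴ) = f * reQuadForm v A := by
    rw [← hAX, ← reQuadForm_conjTranspose v (A * X), conjTranspose_mul, hHerm.eq]
  have hA' : 0 ≤ reQuadForm v (A + Aᴴ + a • 1) := hA.re_dotProduct_nonneg v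
  have hineq' : 0 ≤ reQuadForm v (M • 1 - (X' + X ^ 2 + A * X + X * Aᴴ)) :=
    hineq.re_dotProduct_nonneg v
  simp only [map_add, map_sub, map_smul, smul_eq_mul, reQuadForm_conjTranspose, hsq, hAX, hXA]
    at hA' hineq'
  linarith [mul_nonneg hf hA']

variable {X X' A : ℝ → Matrix ι ι 𝕜} {f f' a M : ℝ → ℝ} {t₀ T : ℝ}

theorem posDef_smul_one_sub_of_riccati_lt
    (hX : ∀ t ∈ Icc t₀ T, ∀ i j,
      HasDerivWithinAt (fun s ↦ X s i j) (X' t i j) (Icc t₀ T) t)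
    (hHerm : ∀ t ∈ Icc t₀ T, (X t).IsHermitian)
    (hA : ∀ t ∈ Icc t₀ T, (A t + (A t)ᴴ + a t • (1 : Matrix ι ι 𝕜)).PosSemidef)
    (hineq : ∀ t ∈ Icc t₀ T, (M t • (1 : Matrix ι ι 𝕜) -
      (X' t + X t ^ 2 + A t * X t + X t * (A t)ᴴ)).PosSemidef)
    (hf : ∀ t ∈ Icc t₀ T, HasDerivWithinAt f (f' t) (Icc t₀ T) t)
    (hf_nonneg : ∀ t ∈ Icc t₀ T, 0 ≤ f t)
    (hf_lt : ∀ t ∈ Icc t₀ T, M t < f' t + f t ^ 2 - a t * f t)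
    (hinit : (f t₀ • (1 : Matrix ι ι 𝕜) - X t₀).PosDef) :
    ∀ t ∈ Icc t₀ T, (f t • (1 : Matrix ι ι 𝕜) - X t).PosDef := by
  refine posDef_of_reQuadForm_deriv_pos_of_mulVec_eq_zero
    (B' := fun t ↦ f' t • (1 : Matrix ι ι 𝕜) - X' t) (fun t ht i j ↦ ?_)
    (fun t ht ↦ (isHermitian_real_smul_one _).sub (hHerm t ht)) (fun t ht v hv hnull ↦ ?_) hinit
  · exact ((hf t ht).smul_const _).sub (hX t ht i j)
  · have heigen : X t *ᵥ v = f t • v := by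
      rw [sub_mulVec, smul_mulVec, one_mulVec, sub_eq_zero] at hnull
      exact hnull.symm
    have hX' := reQuadForm_le_of_riccati_of_mulVec_eq_smul (hHerm t ht) (hA t ht) (hineq t ht)
      (hf_nonneg t ht) heigen
    have hlt := mul_lt_mul_of_pos_right (hf_lt t ht) (reQuadForm_one_pos hv)
    rw [map_sub, map_smul, smul_eq_mul]
    linarith

theorem posSemidef_smul_one_sub_of_riccati_le
    (hX : ∀ t ∈ Icc t₀ T, ∀ i j,
      HasDerivWithinAt (fun s ↦ X s i j) (X' t i j) (Icc t₀ T) t)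
    (hHerm : ∀ t ∈ Icc t₀ T, (X t).IsHermitian)
    (hA : ∀ t ∈ Icc t₀ T, (A t + (A t)ᴴ + a t • (1 : Matrix ι ι 𝕜)).PosSemidef)
    (hineq : ∀ t ∈ Icc t₀ T, (M t • (1 : Matrix ι ι 𝕜) -
      (X' t + X t ^ 2 + A t * X t + X t * (A t)ᴴ)).PosSemidef)
    (hf : ∀ t ∈ Icc t₀ T, HasDerivWithinAt f (f' t) (Icc t₀ T) t)
    (hf_nonneg : ∀ t ∈ Icc t₀ T, 0 ≤ f t) (haf : ∀ t ∈ Icc t₀ T, a t ≤ 2 * f t)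
    (hf_le : ∀ t ∈ Icc t₀ T, M t ≤ f' t + f t ^ 2 - a t * f t)
    (hinit : (f t₀ • (1 : Matrix ι ι 𝕜) - X t₀).PosSemidef) :
    ∀ t ∈ Icc t₀ T, (f t • (1 : Matrix ι ι 𝕜) - X t).PosSemidef := by
  refine fun t ht ↦ posSemidef_of_forall_pos_add_smul_one fun ε hε ↦ ?_
  have hshift : ∀ s, (f s + ε) • (1 : Matrix ι ι 𝕜) - X s =
      f s • (1 : Matrix ι ι 𝕜) - X s + ε • (1 : Matrix ι ι 𝕜) := fun s ↦ by
    rw [add_smul]; abel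
  have hf_lt : ∀ s ∈ Icc t₀ T, M s < f' s + (f s + ε) ^ 2 - a s * (f s + ε) := fun s hs ↦ by
    have hgain : 0 < ε * (2 * f s - a s + ε) := mul_pos hε (by linarith [haf s hs])
    linarith [hf_le s hs]
  rw [← hshift]
  refine (posDef_smul_one_sub_of_riccati_lt hX hHerm hA hineq (fun s hs ↦ (hf s hs).add_const ε)
    (fun s hs ↦ add_nonneg (hf_nonneg s hs) hε.le) hf_lt ?_ t ht).posSemidef
  rw [hshift]
  exact PosDef.posSemidef_add hinit (PosDef.one.smul hε)

theorem hessian_comparison_analytic_general {a b c M : ℝ} (hM : 0 ≤ M)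
    (hc : 2 * M + a ^ 2 ≤ c) (hb : b ≤ √c)
    (hX : ∀ ρ ∈ Ioc 0 T, ∀ i j,
      HasDerivWithinAt (fun t ↦ X t i j) (X' ρ i j) (Ioc 0 T) ρ)
    (hHerm : ∀ ρ ∈ Ioc 0 T, (X ρ).IsHermitian)
    (hA : ∀ ρ ∈ Ioc 0 T, (A ρ + (A ρ)ᴴ + a • (1 : Matrix ι ι 𝕜)).PosSemidef)
    (hineq : ∀ ρ ∈ Ioc 0 T, (M • (1 : Matrix ι ι 𝕜) -
      (X' ρ + X ρ ^ 2 + A ρ * X ρ + X ρ * (A ρ)ᴴ)).PosSemidef)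
    (hinit : ∃ ρ₀ ∈ Ioc 0 T, ∀ ρ ∈ Ioc 0 ρ₀,
      ((1 / ρ + b) • (1 : Matrix ι ι 𝕜) - X ρ).PosSemidef) :
    ∀ ρ ∈ Ioc 0 T, ((1 / ρ + √c) • (1 : Matrix ι ι 𝕜) - X ρ).PosSemidef := by
  obtain ⟨ρ₀, hρ₀, hinit⟩ := hinit
  have hnear : ∀ ρ ∈ Ioc 0 ρ₀, ((1 / ρ + √c) • (1 : Matrix ι ι 𝕜) - X ρ).PosSemidef :=
    fun ρ hρ ↦ posSemidef_smul_one_sub_mono (by gcongr) (hinit ρ hρ)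
  intro ρ hρ
  obtain hle | hlt := le_or_gt ρ ρ₀
  · exact hnear ρ ⟨hρ.1, hle⟩
  have hsub : Icc ρ₀ T ⊆ Ioc 0 T := fun t ht ↦ ⟨hρ₀.1.trans_le ht.1, ht.2⟩
  have hsq : √c ^ 2 = c := Real.sq_sqrt (by linarith [sq_nonneg a])
  have ha : a ≤ √c := Real.le_sqrt_of_sq_le (by linarith)
  have hpos : ∀ t ∈ Icc ρ₀ T, 0 < 1 / t := fun t ht ↦ one_div_pos.2 (hsub ht).1
  refine posSemidef_smul_one_sub_of_riccati_le (f' := fun t ↦ -(1 / t) ^ 2)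
    (fun t ht i j ↦ (hX t (hsub ht) i j).mono hsub) (fun t ht ↦ hHerm t (hsub ht))
    (fun t ht ↦ hA t (hsub ht)) (fun t ht ↦ hineq t (hsub ht)) (fun t ht ↦ ?_)
    (fun t ht ↦ (add_pos_of_pos_of_nonneg (hpos t ht) (Real.sqrt_nonneg c)).le)
    (fun t ht ↦ ?_) (fun t ht ↦ ?_) (hnear ρ₀ ⟨hρ₀.1, le_rfl⟩) ρ ⟨hlt.le, hρ.2⟩
  · simpa [one_div] using ((hasDerivAt_inv (hsub ht).1.ne').add_const √c).hasDerivWithinAt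
  · linarith [hpos t ht, Real.sqrt_nonneg c]
  · have hcross : 0 ≤ 1 / t * (2 * √c - a) :=
      mul_nonneg (hpos t ht).le (by linarith [Real.sqrt_nonneg c])
    have ham_gm : 2 * a * √c ≤ a ^ 2 + √c ^ 2 := two_mul_le_add_sq a √c
    linarith

end MatrixRiccati

/-- Analytic form of the Hessian comparison for almost Hermitian manifolds: if the
Hermitian-matrix-valued `C¹` function `X` satisfies the matrix Riccati inequality
`X' + X² + AX + XAᴴ ≤ ((2√n + 1/2)A₁² + A₂ + K/2)·I` on `(0, T]`, where
`A + Aᴴ + √2·A₁·I ⪰ 0`, and `X ρ ≤ (1/ρ + (√2/2)A₁)·I` near `0`, then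
`X ρ ≤ (1/ρ + √c)·I` on `(0, T]` with `c = (4√n + 3)A₁² + 2A₂ + K`. -/
theorem hessian_comparison_analytic (n : ℕ) (hn : 1 ≤ n)
    (A₁ A₂ K : ℝ) (hA₁ : 0 ≤ A₁) (hA₂ : 0 ≤ A₂) (hK : 0 ≤ K)
    (T : ℝ) (hT : 0 < T)
    (X X' A : ℝ → Matrix (Fin n) (Fin n) ℂ)
    (hX : ∀ ρ ∈ Set.Ioc 0 T, ∀ i j,
      HasDerivWithinAt (fun t => X t i j) (X' ρ i j) (Set.Ioc 0 T) ρ)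
    (hX' : ∀ i j, ContinuousOn (fun ρ => X' ρ i j) (Set.Ioc 0 T))
    (hHerm : ∀ ρ ∈ Set.Ioc 0 T, (X ρ).IsHermitian)
    (hAcont : ∀ i j, ContinuousOn (fun ρ => A ρ i j) (Set.Ioc 0 T))
    (hA : ∀ ρ ∈ Set.Ioc 0 T,
      (A ρ + (A ρ)ᴴ + (Real.sqrt 2 * A₁) • (1 : Matrix (Fin n) (Fin n) ℂ)).PosSemidef)
    (hineq : ∀ ρ ∈ Set.Ioc 0 T,
      (((2 * Real.sqrt n + 1 / 2) * A₁ ^ 2 + A₂ + K / 2) •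
          (1 : Matrix (Fin n) (Fin n) ℂ)
        - (X' ρ + X ρ ^ 2 + A ρ * X ρ + X ρ * (A ρ)ᴴ)).PosSemidef)
    (hinit : ∃ ρ₀ ∈ Set.Ioc 0 T, ∀ ρ ∈ Set.Ioc 0 ρ₀,
      ((1 / ρ + Real.sqrt 2 / 2 * A₁) • (1 : Matrix (Fin n) (Fin n) ℂ) - X ρ).PosSemidef) :
    ∀ ρ ∈ Set.Ioc 0 T,
      ((1 / ρ + Real.sqrt ((4 * Real.sqrt n + 3) * A₁ ^ 2 + 2 * A₂ + K)) •
          (1 : Matrix (Fin n) (Fin n) ℂ) - X ρ).PosSemidef := by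
  have hsq : (√2 * A₁) ^ 2 = 2 * A₁ ^ 2 := by rw [mul_pow, Real.sq_sqrt zero_le_two]
  have hb : (√2 / 2 * A₁) ^ 2 ≤ (4 * √n + 3) * A₁ ^ 2 + 2 * A₂ + K := by
    have : 0 ≤ √n * A₁ ^ 2 := by positivity
    linarith [sq_nonneg A₁]
  exact hessian_comparison_analytic_general (by positivity) (by rw [hsq]; linarith)
    (Real.le_sqrt_of_sq_le hb) hX hHerm hA hineq hinit
end

section
/- Analytic form of the nearly Kähler Hessian comparison for K < 0: Let K < 0, n ≥ 1, and T > 0. Let X : (0, T] → M_n(ℂ) be continuously differentiable with X(ρ) Hermitian for every ρ, and let e₁ ∈ ℂⁿ be the first standard basis vector. Let Y(ρ) be the diagonal matrix with first entry (√(−2K)/2)·coth(√(−2K)·ρ) and remaining diagonal entries √(−K/2)·coth(√(−K/2)·ρ). Assume that D(ρ) − ( X'(ρ) + X(ρ)² + (X(ρ)e₁)(X(ρ)e₁)* ) is positive semidefinite for all ρ ∈ (0, T], where D(ρ) is the constant diagonal matrix with first entry −K and remaining entries −K/2, and that there exists ρ₀ ∈ (0, T] with Y(ρ) − X(ρ)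 positive semidefinite for all ρ ∈ (0, ρ₀]. Then Y(ρ) − X(ρ) is positive semidefinite for every ρ ∈ (0, T]. -/
open Matrix ComplexOrder

/-! Since `X² + (Xe₁)(Xe₁)ᴴ = XPX` with `P = 1 + e₁e₁ᴴ`, the hypothesis on `X` is the Riccati
inequality `X' + XPX ≤ D`, and `Y` solves the equation `Y' + YPY = D`. For `Z = Y - X` this gives
`Z' + YPZ + ZPY ≥ ZPZ ≥ 0`, so `SᴴZS` is increasing in the Loewner order for every solution `S` of
the linearized equation `S' = PYS`. The diagonal matrix `S` with entries `sinh(√(-2K)ρ)` and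
`sinh(√(-K/2)ρ)` is one; it is invertible for `ρ > 0`, so positivity of `Z` propagates from small
`ρ` to all larger ones. -/

theorem orderedSpace_monotoneOn_of_hasDerivWithinAt_nonneg {E : Type*} [NormedAddCommGroup E]
    [NormedSpace ℝ E] [PartialOrder E] [IsOrderedAddMonoid E] [PosSMulMono ℝ E]
    [OrderClosedTopology E] {D : Set ℝ} (hD : Convex ℝ D) {f f' : ℝ → E} (hf : ContinuousOn f D)
    (hf' : ∀ t ∈ interior D, HasDerivWithinAt f (f' t) (interior D) t)
    (hf'₀ : ∀ t ∈ interior D, 0 ≤ f' t) : MonotoneOn f D := by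
  intro a ha b hb hab
  by_contra hnot
  have hmem : f b - f a ∉ ProperCone.positive ℝ E := fun h => hnot (sub_nonneg.1 h)
  obtain ⟨φ, hφ, hφ_neg⟩ := (ProperCone.positive ℝ E).hyperplane_separation_point hmem
  have hmono : MonotoneOn (φ ∘ f) D :=
    monotoneOn_of_hasDerivWithinAt_nonneg hD (φ.continuous.comp_continuousOn hf)
      (fun t ht => φ.hasFDerivAt.comp_hasDerivWithinAt t (hf' t ht))
      fun t ht => hφ _ (hf'₀ t ht)
  rw [map_sub] at hφ_neg
  exact hφ_neg.not_ge (sub_nonneg.2 (hmono ha hb hab))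

section RiccatiComparison

theorem riccati_linearization_nonneg {R : Type*} [Ring R] [PartialOrder R] [StarRing R]
    [StarOrderedRing R] {p x y x' y' : R} (hp : 0 ≤ p) (hx : IsSelfAdjoint x)
    (hy : IsSelfAdjoint y) (hle : x' + x * p * x ≤ y' + y * p * y) :
    0 ≤ y * p * (y - x) + (y' - x') + (y - x) * p * y := by
  have hquad : 0 ≤ (y - x) * p * (y - x) := (hy.sub hx).conjugate_nonneg hp
  calc 0 ≤ y' + y * p * y - (x' + x * p * x) + (y - x) * p * (y - x) :=
        add_nonneg (sub_nonneg.2 hle) hquad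
    _ = y * p * (y - x) + (y' - x') + (y - x) * p * y := by noncomm_ring

variable {A : Type*} [CStarAlgebra A] [PartialOrder A] [StarOrderedRing A]
  {D : Set ℝ} {p : A} {x x' y y' s : ℝ → A}

theorem riccati_monotoneOn_conjugate_sub (hD : Convex ℝ D) (hp : 0 ≤ p)
    (hx : ∀ t ∈ D, HasDerivWithinAt x (x' t) D t) (hy : ∀ t ∈ D, HasDerivWithinAt y (y' t) D t)
    (hs : ∀ t ∈ D, HasDerivWithinAt s (p * y t * s t) D t)
    (hx_sa : ∀ t ∈ D, IsSelfAdjoint (x t)) (hy_sa : ∀ t ∈ D, IsSelfAdjoint (y t))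
    (hle : ∀ t ∈ D, x' t + x t * p * x t ≤ y' t + y t * p * y t) :
    MonotoneOn (fun t => star (s t) * (y t - x t) * s t) D := by
  have hderiv : ∀ t ∈ D, HasDerivWithinAt (fun t => star (s t) * (y t - x t) * s t)
      (star (s t) * (y t * p * (y t - x t) + (y' t - x' t) + (y t - x t) * p * y t) * s t) D t := by
    intro t ht
    refine (((hs t ht).star.fun_mul ((hy t ht).fun_sub (hx t ht))).fun_mul
      (hs t ht)).congr_deriv ?_
    simp only [star_mul, (hy_sa t ht).star_eq, (IsSelfAdjoint.of_nonneg hp).star_eq]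
    noncomm_ring
  refine orderedSpace_monotoneOn_of_hasDerivWithinAt_nonneg hD
    (fun t ht => (hderiv t ht).continuousWithinAt)
    (fun t ht => (hderiv t (interior_subset ht)).mono interior_subset) fun t ht => ?_
  have htD := interior_subset ht
  exact star_left_conjugate_nonneg
    (riccati_linearization_nonneg hp (hx_sa t htD) (hy_sa t htD) (hle t htD)) _

theorem riccati_comparison (hD : Convex ℝ D) (hp : 0 ≤ p)
    (hx : ∀ t ∈ D, HasDerivWithinAt x (x' t) D t) (hy : ∀ t ∈ D, HasDerivWithinAt y (y' t) D t)
    (hs : ∀ t ∈ D, HasDerivWithinAt s (p * y t * s t) D t)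
    (hx_sa : ∀ t ∈ D, IsSelfAdjoint (x t)) (hy_sa : ∀ t ∈ D, IsSelfAdjoint (y t))
    (hle : ∀ t ∈ D, x' t + x t * p * x t ≤ y' t + y t * p * y t)
    {a b : ℝ} (ha : a ∈ D) (hb : b ∈ D) (hab : a ≤ b) (hsb : IsUnit (s b)) (hxy : x a ≤ y a) :
    x b ≤ y b := by
  rw [← sub_nonneg, ← hsb.star_left_conjugate_nonneg_iff]
  calc 0 ≤ star (s a) * (y a - x a) * s a := star_left_conjugate_nonneg (sub_nonneg.2 hxy) _
    _ ≤ star (s b) * (y b - x b) * s b :=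
      riccati_monotoneOn_conjugate_sub hD hp hx hy hs hx_sa hy_sa hle ha hb hab

end RiccatiComparison

section MatrixDerivative

variable {m n F : Type*} [Finite n] [NormedAddCommGroup F] [NormedSpace ℝ F]
  {D : Set ℝ} {t : ℝ}

theorem hasDerivWithinAt_matrix {M : ℝ → Matrix m n F} {M' : Matrix m n F} :
    HasDerivWithinAt M M' D t ↔ ∀ i j, HasDerivWithinAt (fun t => M t i j) (M' i j) D t := by
  have := Fintype.ofFinite n
  exact hasDerivWithinAt_pi.trans (forall_congr' fun _ => hasDerivWithinAt_pi)

theorem hasDerivWithinAt_matrix_diagonal [DecidableEq n] {d : ℝ → n → F} {d' : n → F}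
    (hd : ∀ j, HasDerivWithinAt (fun t => d t j) (d' j) D t) :
    HasDerivWithinAt (fun t => diagonal (d t)) (diagonal d') D t := by
  refine hasDerivWithinAt_matrix.2 fun i j => ?_
  obtain rfl | hij := eq_or_ne i j
  · simpa only [diagonal_apply_eq] using hd i
  · simpa only [diagonal_apply_ne _ hij] using hasDerivWithinAt_const t D (0 : F)

end MatrixDerivative

section CothSolution

/-- The scalar model `(c / p) coth(c t)`: the solution of the Riccati equation `y' + p y² = c² / p`
on `t > 0` with a pole at `t = 0`. -/
noncomputable def cothRiccati (c p t : ℝ) : ℝ :=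
  c / p * (Real.cosh (c * t) / Real.sinh (c * t))

variable {c p t : ℝ}

theorem hasDerivAt_sinh_const_mul (c t : ℝ) :
    HasDerivAt (fun t => Real.sinh (c * t)) (c * Real.cosh (c * t)) t := by
  simpa only [mul_one, mul_comm, id] using ((hasDerivAt_id t).const_mul c).sinh

theorem hasDerivAt_cosh_const_mul (c t : ℝ) :
    HasDerivAt (fun t => Real.cosh (c * t)) (c * Real.sinh (c * t)) t := by
  simpa only [mul_one, mul_comm, id] using ((hasDerivAt_id t).const_mul c).cosh

theorem hasDerivAt_cothRiccati (hp : p ≠ 0) (ht : Real.sinh (c * t) ≠ 0) :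
    HasDerivAt (cothRiccati c p) (c ^ 2 / p - p * cothRiccati c p t ^ 2) t := by
  refine (((hasDerivAt_cosh_const_mul c t).fun_div (hasDerivAt_sinh_const_mul c t) ht).const_mul
    (c / p)).congr_deriv ?_
  unfold cothRiccati
  field_simp

theorem mul_cothRiccati_mul_sinh (hp : p ≠ 0) (ht : Real.sinh (c * t) ≠ 0) :
    p * cothRiccati c p t * Real.sinh (c * t) = c * Real.cosh (c * t) := by
  unfold cothRiccati
  field_simp

end CothSolution

section DiagonalRiccati

variable {ι : Type*} [DecidableEq ι]

theorem isHermitian_diagonal_ofReal (d : ι → ℝ) :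
    (diagonal fun j => (d j : ℂ)).IsHermitian :=
  isHermitian_diagonal_of_self_adjoint _ (funext fun j => Complex.conj_ofReal (d j))

variable [Fintype ι]

theorem sq_add_vecMulVec_mulVec_single {R : Type*} [CommRing R] [StarRing R] {X : Matrix ι ι R}
    (hX : X.IsHermitian) (i : ι) :
    X ^ 2 + vecMulVec (X *ᵥ Pi.single i 1) (star (X *ᵥ Pi.single i 1)) =
      X * diagonal (fun j => if j = i then 2 else 1) * X := by
  have hP : diagonal (fun j => if j = i then (2 : R) else 1) =
      1 + vecMulVec (Pi.single i 1) (star (Pi.single i 1)) := by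
    rw [← Pi.single_star, star_one, ← single_eq_single_vecMulVec_single, ← diagonal_single,
      ← diagonal_one, diagonal_add]
    congr 1
    funext j
    obtain rfl | hj := eq_or_ne j i
    · simp [one_add_one_eq_two]
    · simp [hj]
  rw [hP, star_mulVec, hX.eq, mul_add, add_mul, mul_one, mul_vecMulVec, vecMulVec_mul, sq]

open scoped MatrixOrder Matrix.Norms.L2Operator

theorem le_diagonal_cothRiccati_of_riccati_le {c p : ι → ℝ} (hc : ∀ j, 0 < c j)
    (hp : ∀ j, 0 < p j) {T : ℝ} {X X' : ℝ → Matrix ι ι ℂ}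
    (hX : ∀ ρ ∈ Set.Ioc 0 T, HasDerivWithinAt X (X' ρ) (Set.Ioc 0 T) ρ)
    (hX_herm : ∀ ρ ∈ Set.Ioc 0 T, (X ρ).IsHermitian)
    (hle : ∀ ρ ∈ Set.Ioc 0 T, X' ρ + X ρ * diagonal (fun j => (p j : ℂ)) * X ρ ≤
      diagonal fun j => ((c j ^ 2 / p j : ℝ) : ℂ))
    (hinit : ∃ᶠ ρ in nhdsWithin 0 (Set.Ioi 0),
      X ρ ≤ diagonal fun j => (cothRiccati (c j) (p j) ρ : ℂ)) :
    ∀ ρ ∈ Set.Ioc 0 T, X ρ ≤ diagonal fun j => (cothRiccati (c j) (p j) ρ : ℂ) := by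
  intro ρ hρ
  have hsinh (t : ℝ) (ht : t ∈ Set.Ioc 0 T) (j : ι) : Real.sinh (c j * t) ≠ 0 :=
    (Real.sinh_pos_iff.2 (mul_pos (hc j) ht.1)).ne'
  have hP : (0 : Matrix ι ι ℂ) ≤ diagonal fun j => (p j : ℂ) :=
    (posSemidef_diagonal_iff.2 fun j => Complex.zero_le_real.2 (hp j).le).nonneg
  have hY : ∀ t ∈ Set.Ioc 0 T, HasDerivWithinAt
      (fun t => diagonal fun j => (cothRiccati (c j) (p j) t : ℂ))
      (diagonal fun j => ((c j ^ 2 / p j - p j * cothRiccati (c j) (p j) t ^ 2 : ℝ) : ℂ))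
      (Set.Ioc 0 T) t := fun t ht => hasDerivWithinAt_matrix_diagonal fun j =>
    (hasDerivAt_cothRiccati (hp j).ne' (hsinh t ht j)).ofReal_comp.hasDerivWithinAt
  have hS : ∀ t ∈ Set.Ioc 0 T, HasDerivWithinAt
      (fun t => diagonal fun j => (Real.sinh (c j * t) : ℂ))
      (diagonal (fun j => (p j : ℂ)) * diagonal (fun j => (cothRiccati (c j) (p j) t : ℂ)) *
        diagonal fun j => (Real.sinh (c j * t) : ℂ)) (Set.Ioc 0 T) t := by
    intro t ht
    simp only [diagonal_mul_diagonal, ← Complex.ofReal_mul,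
      mul_cothRiccati_mul_sinh (hp _).ne' (hsinh t ht _)]
    exact hasDerivWithinAt_matrix_diagonal fun j =>
      (hasDerivAt_sinh_const_mul (c j) t).ofReal_comp.hasDerivWithinAt
  have hS_unit : IsUnit (diagonal fun j => (Real.sinh (c j * ρ) : ℂ)) :=
    isUnit_diagonal.2 <| Pi.isUnit_iff.2 fun j =>
      (Complex.ofReal_ne_zero.2 (hsinh ρ hρ j)).isUnit
  obtain ⟨r, hr, hr_mem⟩ := (hinit.and_eventually (Ioc_mem_nhdsGT hρ.1)).exists
  refine riccati_comparison (convex_Ioc 0 T) hP hX hY hS hX_herm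
    (fun t _ => isHermitian_diagonal_ofReal _) (fun t ht => (hle t ht).trans_eq ?_)
    ⟨hr_mem.1, hr_mem.2.trans hρ.2⟩ hρ hr_mem.2 hS_unit hr
  rw [diagonal_mul_diagonal, diagonal_mul_diagonal, diagonal_add]
  congr 1
  funext j
  push_cast
  ring

end DiagonalRiccati

theorem nearly_kahler_hessian_comparison_neg_general {ι : Type*} [Fintype ι] [DecidableEq ι]
    {K : ℝ} (hK : K < 0) (i₀ : ι) {T : ℝ} {X X' : ℝ → Matrix ι ι ℂ}
    {e₁ : ι → ℂ} (he₁ : e₁ = Pi.single i₀ 1)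
    {Y : ℝ → Matrix ι ι ℂ}
    (hY : Y = fun ρ => diagonal fun j =>
      if j = i₀ then
        ((Real.sqrt (-2 * K) / 2 *
          (Real.cosh (Real.sqrt (-2 * K) * ρ) / Real.sinh (Real.sqrt (-2 * K) * ρ)) : ℝ) : ℂ)
      else
        ((Real.sqrt (-K / 2) *
          (Real.cosh (Real.sqrt (-K / 2) * ρ) / Real.sinh (Real.sqrt (-K / 2) * ρ)) : ℝ) : ℂ))
    {D : Matrix ι ι ℂ}
    (hD : D = diagonal fun j => if j = i₀ then ((-K : ℝ) : ℂ) else ((-(K / 2) : ℝ) : ℂ))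
    (hX : ∀ ρ ∈ Set.Ioc 0 T, ∀ i j,
      HasDerivWithinAt (fun t => X t i j) (X' ρ i j) (Set.Ioc 0 T) ρ)
    (hHerm : ∀ ρ ∈ Set.Ioc 0 T, (X ρ).IsHermitian)
    (hineq : ∀ ρ ∈ Set.Ioc 0 T,
      (D - (X' ρ + X ρ ^ 2 + vecMulVec (X ρ *ᵥ e₁) (star (X ρ *ᵥ e₁)))).PosSemidef)
    (hinit : ∃ᶠ ρ in nhdsWithin 0 (Set.Ioi 0), (Y ρ - X ρ).PosSemidef) :
    ∀ ρ ∈ Set.Ioc 0 T, (Y ρ - X ρ).PosSemidef := by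
  set c : ι → ℝ := fun j => if j = i₀ then Real.sqrt (-2 * K) else Real.sqrt (-K / 2) with hc
  set p : ι → ℝ := fun j => if j = i₀ then 2 else 1 with hp
  have hc_pos (j : ι) : 0 < c j := by
    simp only [hc]; split_ifs <;> exact Real.sqrt_pos.2 (by linarith)
  have hp_pos (j : ι) : 0 < p j := by
    simp only [hp]; split_ifs <;> norm_num
  have hY_coth : Y = fun ρ => diagonal fun j => (cothRiccati (c j) (p j) ρ : ℂ) := by
    rw [hY]; funext ρ; congr 1; funext j
    simp only [hc, hp, cothRiccati]
    split_ifs <;> simp only [div_one]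
  have hD_weights : D = diagonal fun j => ((c j ^ 2 / p j : ℝ) : ℂ) := by
    rw [hD]; congr 1; funext j
    simp only [hc, hp]
    split_ifs
    · rw [Real.sq_sqrt (by linarith)]; congr 1; ring
    · rw [Real.sq_sqrt (by linarith)]; congr 1; ring
  have hP : (diagonal fun j => (p j : ℂ)) = diagonal fun j => if j = i₀ then 2 else 1 := by
    simp only [hp, apply_ite Complex.ofReal, Complex.ofReal_ofNat, Complex.ofReal_one]
  subst hY_coth hD_weights he₁
  refine le_diagonal_cothRiccati_of_riccati_le hc_pos hp_pos
    (fun ρ hρ => hasDerivWithinAt_matrix.2 (hX ρ hρ)) hHerm (fun ρ hρ => ?_) hinit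
  rw [hP, ← sq_add_vecMulVec_mulVec_single (hHerm ρ hρ), ← add_assoc]
  exact hineq ρ hρ

/-- Analytic form of the nearly Kähler Hessian comparison for `K < 0`: if the Hermitian
`C¹` matrix-valued function `X` satisfies
`X' + X² + (Xe₁)(Xe₁)ᴴ ≤ D = diag(-K, -K/2, …, -K/2)` on `(0, T]`, and `X ≤ Y` near `0`
where `Y(ρ) = diag((√(-2K)/2)·coth(√(-2K)ρ), √(-K/2)·coth(√(-K/2)ρ), …)`, then
`X ρ ≤ Y ρ` for all `ρ ∈ (0, T]`. -/
theorem nearly_kahler_hessian_comparison_neg (K : ℝ) (hK : K < 0) (n : ℕ) (hn : 1 ≤ n)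
    (T : ℝ) (hT : 0 < T)
    (X X' : ℝ → Matrix (Fin n) (Fin n) ℂ)
    (e₁ : Fin n → ℂ) (he₁ : e₁ = fun i : Fin n => if (i : ℕ) = 0 then (1 : ℂ) else 0)
    (Y : ℝ → Matrix (Fin n) (Fin n) ℂ)
    (hY : Y = fun ρ => Matrix.diagonal (fun j : Fin n =>
      if (j : ℕ) = 0 then
        ((Real.sqrt (-2 * K) / 2 *
          (Real.cosh (Real.sqrt (-2 * K) * ρ) / Real.sinh (Real.sqrt (-2 * K) * ρ)) : ℝ) : ℂ)
      else
        ((Real.sqrt (-K / 2) *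
          (Real.cosh (Real.sqrt (-K / 2) * ρ) / Real.sinh (Real.sqrt (-K / 2) * ρ)) : ℝ) : ℂ)))
    (D : Matrix (Fin n) (Fin n) ℂ)
    (hD : D = Matrix.diagonal (fun j : Fin n =>
      if (j : ℕ) = 0 then ((-K : ℝ) : ℂ) else ((-(K / 2) : ℝ) : ℂ)))
    (hX : ∀ ρ ∈ Set.Ioc 0 T, ∀ i j,
      HasDerivWithinAt (fun t => X t i j) (X' ρ i j) (Set.Ioc 0 T) ρ)
    (hX' : ∀ i j, ContinuousOn (fun ρ => X' ρ i j) (Set.Ioc 0 T))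
    (hHerm : ∀ ρ ∈ Set.Ioc 0 T, (X ρ).IsHermitian)
    (hineq : ∀ ρ ∈ Set.Ioc 0 T,
      (D - (X' ρ + X ρ ^ 2 + vecMulVec (X ρ *ᵥ e₁) (star (X ρ *ᵥ e₁)))).PosSemidef)
    (hinit : ∃ ρ₀ ∈ Set.Ioc 0 T, ∀ ρ ∈ Set.Ioc 0 ρ₀, (Y ρ - X ρ).PosSemidef) :
    ∀ ρ ∈ Set.Ioc 0 T, (Y ρ - X ρ).PosSemidef := by
  obtain ⟨r, hr, hr_init⟩ := hinit
  exact nearly_kahler_hessian_comparison_neg_general hK ⟨0, hn⟩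
    (he₁.trans (by ext j; simp only [Pi.single_apply, Fin.ext_iff]))
    (by simpa only [Fin.ext_iff] using hY) (by simpa only [Fin.ext_iff] using hD) hX hHerm hineq
    (Filter.eventually_of_mem (Ioc_mem_nhdsGT hr.1) hr_init).frequently
end
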